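/- Let R > 0 and ε ∈ (0,1), and let ψ̃ be a smooth subharmonic function on an open neighborhood of the closed disk of radius R centered at 0 in ℂ, satisfying ψ̃ ≤ 1 on the closed disk and ψ̃(0) ≥ 0. Then ∫_{B_{R(1−ε)}(0)} Δψ̃(ζ) dA(ζ) ≤ 2π / log(1/(1−ε)); in particular, for every ε ∈ (0,1) there is a constant C(ε), independent of R and ψ̃, bounding (1/2π) ∫_{B_{R(1−ε)}(0)} Δψ̃ dA. -/

import Mathlib

open MeasureTheory

/-- The Laplacian `Δf = ∂²f/∂x² + ∂²f/∂y²` of a function `f : ℂ → ℝ`, expressed via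
iterated directional (Fréchet) derivatives in the directions `1` and `i`. -/
noncomputable def laplacian (f : ℂ → ℝ) (z : ℂ) : ℝ :=
  fderiv ℝ (fun w => fderiv ℝ f w 1) z 1 +
    fderiv ℝ (fun w => fderiv ℝ f w Complex.I) z Complex.I

/-!
Let `A s` be the average of `f` over the circle of radius `s` about `c` and `m s` the integral of
`Δf` over the disk it bounds. By the divergence theorem, `2π A'(s) = m s / s`. Since `Δf ≥ 0`, the
function `m` is nondecreasing, so `2π A s - m r * log s` is nondecreasing for `s ∈ [r, R]`;
comparing its values at the endpoints gives `m r * log (R / r) ≤ 2π (A R - A r)`. The right-hand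
side is controlled by the values of `f` on the outer circle and at the center, because `A` is
nondecreasing and `A 0 = f c`.
-/

section PlanarCalculus

open Complex Filter InnerProductSpace Metric Real Set Topology
open scoped Laplacian

variable {E : Type*} [NormedAddCommGroup E] [NormedSpace ℝ E]

theorem hasDerivAt_intervalIntegral_of_contDiffAt {F : ℝ × ℝ → E} {x₀ a b : ℝ}
    (hF : ∀ t ∈ uIcc a b, ContDiffAt ℝ 1 F (x₀, t)) :
    HasDerivAt (fun x ↦ ∫ t in a..b, F (x, t)) (∫ t in a..b, fderiv ℝ F (x₀, t) (1, 0)) x₀ := by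
  let F' : ℝ × ℝ → E := fun p ↦ fderiv ℝ F p (1, 0)
  have hF'_cont : ∀ {p}, ContDiffAt ℝ 1 F p → ContinuousAt F' p := fun hp ↦
    (hp.continuousAt_fderiv (by simp)).clm_apply continuousAt_const
  have hF'_cont₀ : ContinuousOn (fun t ↦ F' (x₀, t)) (uIcc a b) := fun t ht ↦
    (ContinuousAt.comp (f := fun t ↦ (x₀, t)) (hF'_cont (hF t ht))
      (by fun_prop)).continuousWithinAt
  obtain ⟨C, hC⟩ := isCompact_uIcc.exists_bound_of_continuousOn hF'_cont₀
  have hF_near : ∀ᶠ x in 𝓝 x₀, ∀ t ∈ uIcc a b, ContDiffAt ℝ 1 F (x, t) :=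
    isCompact_uIcc.eventually_forall_of_forall_eventually fun t ht ↦ (hF t ht).eventually (by simp)
  have hF'_near : ∀ᶠ x in 𝓝 x₀, ∀ t ∈ uIcc a b, ‖F' (x, t)‖ < C + 1 :=
    isCompact_uIcc.eventually_forall_of_forall_eventually fun t ht ↦
      (hF'_cont (hF t ht)).norm.eventually_lt_const ((hC t ht).trans_lt (lt_add_one C))
  have hF_cont : ∀ x, (∀ t ∈ uIcc a b, ContDiffAt ℝ 1 F (x, t)) →
      ContinuousOn (fun t ↦ F (x, t)) (uIcc a b) := fun x hx t ht ↦
    (ContinuousAt.comp (f := fun t ↦ (x, t)) (hx t ht).continuousAt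
      (by fun_prop)).continuousWithinAt
  refine (intervalIntegral.hasDerivAt_integral_of_dominated_loc_of_deriv_le
    (F := fun x t ↦ F (x, t)) (F' := fun x t ↦ F' (x, t)) (bound := fun _ ↦ C + 1)
    (hF_near.and hF'_near) ?_ (hF_cont x₀ hF_near.self_of_nhds).intervalIntegrable
    ((hF'_cont₀.mono uIoc_subset_uIcc).aestronglyMeasurable measurableSet_uIoc) ?_
    intervalIntegrable_const ?_).2
  · filter_upwards [hF_near] with x hx
    exact ((hF_cont x hx).mono uIoc_subset_uIcc).aestronglyMeasurable measurableSet_uIoc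
  · exact .of_forall fun t ht x hx ↦ (hx.2 t (uIoc_subset_uIcc ht)).le
  · refine .of_forall fun t ht x hx ↦ ?_
    have hdiff := (hx.1 t (uIoc_subset_uIcc ht)).differentiableAt one_ne_zero
    exact hdiff.hasFDerivAt.comp_hasDerivAt x ((hasDerivAt_id x).prodMk (hasDerivAt_const x t))

theorem mapsTo_circleMap_closedBall (c : ℂ) (r : ℝ) (t : Set ℝ) :
    MapsTo (fun p : ℝ × ℝ ↦ circleMap c p.1 p.2) (Icc 0 r ×ˢ t) (closedBall c r) := fun p hp ↦
  closedBall_subset_closedBall hp.1.2 (circleMap_mem_closedBall c hp.1.1 p.2)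

theorem two_pi_mul_smul_circleAverage (g : ℂ → E) (c : ℂ) (s : ℝ) :
    (2 * π * s) • circleAverage g c s = ∫ θ in (0 : ℝ)..2 * π, s • g (circleMap c s θ) := by
  rw [intervalIntegral.integral_smul, circleAverage_def, smul_smul]
  congr 1
  field_simp

theorem setIntegral_ball_eq_integral_polar (g : ℂ → E) (c : ℂ) (r : ℝ) :
    ∫ z in ball c r, g z =
      ∫ p in Ioo 0 r ×ˢ Ioo (-π) π, p.1 • g (circleMap c p.1 p.2) := by
  have hpolar (s θ : ℝ) : c + Complex.polarCoord.symm (s, θ) = circleMap c s θ := by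
    simp [circleMap, exp_mul_I]
  have hindicator : EqOn (fun p : ℝ × ℝ ↦ p.1 • (ball c r).indicator g (circleMap c p.1 p.2))
      ((Ioo 0 r ×ˢ Ioo (-π) π).indicator fun p ↦ p.1 • g (circleMap c p.1 p.2))
      polarCoord.target := by
    rintro ⟨s, θ⟩ ⟨hs : 0 < s, hθ⟩
    have hdist : dist (circleMap c s θ) c = s := circleMap_mem_sphere c hs.le θ
    by_cases hsr : s < r <;> simp [indicator, hdist, hs, hsr, hθ.1, hθ.2]
  calc ∫ z in ball c r, g z
      = ∫ p in polarCoord.target, p.1 • (ball c r).indicator g (circleMap c p.1 p.2) := by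
        rw [← integral_indicator measurableSet_ball, ← integral_add_left_eq_self _ c,
          ← Complex.integral_comp_polarCoord_symm]
        simp only [← hpolar]
    _ = ∫ p in Ioo 0 r ×ˢ Ioo (-π) π, p.1 • g (circleMap c p.1 p.2) := by
        rw [setIntegral_congr_fun polarCoord.open_target.measurableSet hindicator,
          setIntegral_indicator (measurableSet_Ioo.prod measurableSet_Ioo), polarCoord_target,
          inter_eq_self_of_subset_right (prod_mono Ioo_subset_Ioi_self subset_rfl)]

theorem setIntegral_ball_eq_intervalIntegral_circleAverage {g : ℂ → E} {c : ℂ} {r : ℝ}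
    (hr : 0 ≤ r) (hg : ContinuousOn g (closedBall c r)) :
    ∫ z in ball c r, g z = ∫ s in (0 : ℝ)..r, (2 * π * s) • circleAverage g c s := by
  have hint : IntegrableOn (fun p : ℝ × ℝ ↦ p.1 • g (circleMap c p.1 p.2))
      (Ioc 0 r ×ˢ Ioc (-π) π) :=
    ((continuousOn_fst.smul (hg.comp circleMap.continuous.continuousOn
      (mapsTo_circleMap_closedBall c r _))).integrableOn_compact
        (isCompact_Icc.prod isCompact_Icc)).mono_set
          (prod_mono Ioc_subset_Icc_self Ioc_subset_Icc_self)
  have hangle (s : ℝ) :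
      ∫ θ in Ioc (-π) π, s • g (circleMap c s θ) = (2 * π * s) • circleAverage g c s := by
    have hperiodic : Function.Periodic (fun θ ↦ s • g (circleMap c s θ)) (2 * π) :=
      (periodic_circleMap c s).comp fun z ↦ s • g z
    rw [two_pi_mul_smul_circleAverage, ← intervalIntegral.integral_of_le (neg_le_self pi_pos.le)]
    convert hperiodic.intervalIntegral_add_eq (-π) 0 using 2 <;> ring
  rw [setIntegral_ball_eq_integral_polar, Measure.volume_eq_prod,
    setIntegral_congr_set (Measure.set_prod_ae_eq Ioo_ae_eq_Ioc Ioo_ae_eq_Ioc),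
    setIntegral_prod _ hint, intervalIntegral.integral_of_le hr]
  simp only [hangle]

theorem laplacian_eq_fderiv_fderiv_circle (f : ℂ → E) (z : ℂ) (e : Circle) :
    Δ f z = fderiv ℝ (fderiv ℝ f) z e e + fderiv ℝ (fderiv ℝ f) z (e * I) (e * I) := by
  rw [laplacian_eq_iteratedFDeriv_orthonormalBasis f (orthonormalBasisOneI.map (rotation e))]
  simp [Fin.sum_univ_two, iteratedFDeriv_two_apply]

theorem continuousAt_laplacian {f : ℂ → E} {z : ℂ} (hf : ContDiffAt ℝ 2 f z) :
    ContinuousAt (Δ f) z := by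
  have hsecond : ContinuousAt (fderiv ℝ (fderiv ℝ f)) z :=
    (hf.fderiv_right (m := 1) (by norm_num)).continuousAt_fderiv (by simp)
  rw [funext fun w ↦ laplacian_eq_fderiv_fderiv_circle f w 1]
  fun_prop

theorem laplacian_eq_laplacian {f : ℂ → ℝ} {z : ℂ} (hf : ContDiffAt ℝ 2 f z) :
    laplacian f z = Δ f z := by
  have hd : DifferentiableAt ℝ (fderiv ℝ f) z :=
    (hf.fderiv_right (m := 1) (by norm_num)).differentiableAt one_ne_zero
  have hsecond (v : ℂ) : fderiv ℝ (fun w ↦ fderiv ℝ f w v) z v = fderiv ℝ (fderiv ℝ f) z v v := by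
    simp [fderiv_clm_apply hd (differentiableAt_const v)]
  simp [laplacian, hsecond, laplacian_eq_fderiv_fderiv_circle f z 1]

theorem hasFDerivAt_circleMap_snd (c : ℂ) (r : ℝ) (p : ℝ × ℝ) :
    HasFDerivAt (fun q : ℝ × ℝ ↦ circleMap c r q.2)
      ((ContinuousLinearMap.snd ℝ ℝ ℝ).smulRight (circleMap 0 r p.2 * I)) p :=
  ((hasDerivAt_circleMap c r p.2).hasFDerivAt.comp p hasFDerivAt_snd).congr_fderiv
    (by ext <;> simp)

theorem hasFDerivAt_circleMap (c : ℂ) (p : ℝ × ℝ) :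
    HasFDerivAt (fun q : ℝ × ℝ ↦ circleMap c q.1 q.2)
      ((ContinuousLinearMap.fst ℝ ℝ ℝ).smulRight (circleMap 0 1 p.2) +
        (ContinuousLinearMap.snd ℝ ℝ ℝ).smulRight (circleMap 0 p.1 p.2 * I)) p := by
  have hpolar : (fun q : ℝ × ℝ ↦ circleMap c q.1 q.2) = fun q ↦ c + q.1 • circleMap 0 1 q.2 := by
    ext q
    simp [circleMap]
  rw [hpolar]
  refine ((hasFDerivAt_fst.smul (hasFDerivAt_circleMap_snd 0 1 p)).const_add c).congr_fderiv ?_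
  ext <;> simp [circleMap, mul_assoc]

theorem contDiff_circleMap_uncurry (c : ℂ) {n : WithTop ℕ∞} :
    ContDiff ℝ n (fun p : ℝ × ℝ ↦ circleMap c p.1 p.2) := by
  unfold circleMap
  have hcast (g : ℝ × ℝ → ℝ) (hg : ContDiff ℝ n g) : ContDiff ℝ n (fun p ↦ (g p : ℂ)) :=
    ofRealCLM.contDiff.comp hg
  exact contDiff_const.add ((hcast _ contDiff_fst).mul
    ((hcast _ contDiff_snd).mul contDiff_const).cexp)

theorem hasDerivAt_circleAverage {f : ℂ → E} {c : ℂ} {r : ℝ} (hr : r ≠ 0)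
    (hf : ∀ z ∈ sphere c |r|, ContDiffAt ℝ 1 f z) :
    HasDerivAt (circleAverage f c) (r⁻¹ • circleAverage (fun z ↦ fderiv ℝ f z (z - c)) c r) r := by
  have hf' (θ : ℝ) : ContDiffAt ℝ 1 f (circleMap c r θ) := hf _ (circleMap_mem_sphere' c r θ)
  have hderiv (θ : ℝ) : fderiv ℝ (fun p : ℝ × ℝ ↦ f (circleMap c p.1 p.2)) (r, θ) (1, 0) =
      r⁻¹ • fderiv ℝ f (circleMap c r θ) (circleMap c r θ - c) := by
    have hcomp := ((hf' θ).differentiableAt one_ne_zero).hasFDerivAt.comp (r, θ)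
      (hasFDerivAt_circleMap c (r, θ))
    have hradius : circleMap c r θ - c = r • circleMap 0 1 θ := by simp [circleMap]
    rw [hradius, map_smul, inv_smul_smul₀ hr]
    simpa [Function.comp_def] using DFunLike.congr_fun hcomp.fderiv (1, 0)
  convert (hasDerivAt_intervalIntegral_of_contDiffAt (a := 0) (b := 2 * π) fun θ _ ↦
    (hf' θ).comp (r, θ) (contDiff_circleMap_uncurry c).contDiffAt).const_smul (2 * π)⁻¹ using 1
  · rfl
  · simp only [Function.comp_def, hderiv, intervalIntegral.integral_smul, circleAverage_def]
    rw [smul_comm]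

/-- The radial component `r ∂f/∂r`, at `p = (r, θ)`, of the gradient flux of `f` in polar
coordinates about `c`; with `angularFlux` it puts the Laplacian in the divergence form
`r Δf = ∂/∂r (r ∂f/∂r) + ∂/∂θ (r⁻¹ ∂f/∂θ)`. -/
noncomputable def radialFlux (f : ℂ → E) (c : ℂ) (p : ℝ × ℝ) : E :=
  fderiv ℝ f (circleMap c p.1 p.2) (circleMap 0 p.1 p.2)

/-- The angular component `r⁻¹ ∂f/∂θ`, at `p = (r, θ)`, of the gradient flux of `f` in polar
coordinates about `c`, written as the derivative in the unit tangent direction so that it is also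
regular at `r = 0`. -/
noncomputable def angularFlux (f : ℂ → E) (c : ℂ) (p : ℝ × ℝ) : E :=
  fderiv ℝ f (circleMap c p.1 p.2) (circleMap 0 1 p.2 * I)

section PolarFlux

variable {f : ℂ → E} {c : ℂ} {p : ℝ × ℝ}

theorem contDiffAt_fderiv_circleMap (hf : ContDiffAt ℝ 2 f (circleMap c p.1 p.2)) :
    ContDiffAt ℝ 1 (fun q : ℝ × ℝ ↦ fderiv ℝ f (circleMap c q.1 q.2)) p :=
  (hf.fderiv_right (m := 1) (by norm_num)).comp p (contDiff_circleMap_uncurry c).contDiffAt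

theorem hasFDerivAt_fderiv_circleMap (hf : ContDiffAt ℝ 2 f (circleMap c p.1 p.2)) :
    HasFDerivAt (fun q : ℝ × ℝ ↦ fderiv ℝ f (circleMap c q.1 q.2))
      (fderiv ℝ (fderiv ℝ f) (circleMap c p.1 p.2) ∘L
        ((ContinuousLinearMap.fst ℝ ℝ ℝ).smulRight (circleMap 0 1 p.2) +
          (ContinuousLinearMap.snd ℝ ℝ ℝ).smulRight (circleMap 0 p.1 p.2 * I))) p :=
  ((hf.fderiv_right (m := 1) (by norm_num)).differentiableAt one_ne_zero).hasFDerivAt.comp p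
    (hasFDerivAt_circleMap c p)

theorem contDiffAt_radialFlux (hf : ContDiffAt ℝ 2 f (circleMap c p.1 p.2)) :
    ContDiffAt ℝ 1 (radialFlux f c) p :=
  (contDiffAt_fderiv_circleMap hf).clm_apply (contDiff_circleMap_uncurry 0).contDiffAt

theorem contDiffAt_angularFlux (hf : ContDiffAt ℝ 2 f (circleMap c p.1 p.2)) :
    ContDiffAt ℝ 1 (angularFlux f c) p :=
  (contDiffAt_fderiv_circleMap hf).clm_apply
    (((contDiff_circleMap 0 1).comp contDiff_snd).mul contDiff_const).contDiffAt

theorem fderiv_radialFlux_apply_one_zero (hf : ContDiffAt ℝ 2 f (circleMap c p.1 p.2)) :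
    fderiv ℝ (radialFlux f c) p (1, 0) = fderiv ℝ f (circleMap c p.1 p.2) (circleMap 0 1 p.2) +
      p.1 • fderiv ℝ (fderiv ℝ f) (circleMap c p.1 p.2) (circleMap 0 1 p.2)
        (circleMap 0 1 p.2) := by
  have hscale : circleMap 0 p.1 p.2 = p.1 • circleMap 0 1 p.2 := by simp [circleMap]
  have hflux : HasFDerivAt (radialFlux f c) _ p :=
    (hasFDerivAt_fderiv_circleMap hf).clm_apply (hasFDerivAt_circleMap 0 p)
  simp [hflux.fderiv, hscale, -real_smul]

theorem fderiv_angularFlux_apply_zero_one (hf : ContDiffAt ℝ 2 f (circleMap c p.1 p.2)) :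
    fderiv ℝ (angularFlux f c) p (0, 1) =
      p.1 • fderiv ℝ (fderiv ℝ f) (circleMap c p.1 p.2) (circleMap 0 1 p.2 * I)
        (circleMap 0 1 p.2 * I) - fderiv ℝ f (circleMap c p.1 p.2) (circleMap 0 1 p.2) := by
  have hscale : circleMap 0 p.1 p.2 = p.1 • circleMap 0 1 p.2 := by simp [circleMap]
  have hrotate : I • (circleMap 0 1 p.2 * I) = -circleMap 0 1 p.2 := by
    rw [smul_eq_mul, mul_left_comm, I_mul_I, mul_neg_one]
  have hflux : HasFDerivAt (angularFlux f c) _ p :=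
    (hasFDerivAt_fderiv_circleMap hf).clm_apply ((hasFDerivAt_circleMap_snd 0 1 p).mul_const I)
  simp [hflux.fderiv, hscale, hrotate, -real_smul, -smul_eq_mul, sub_eq_neg_add]

theorem fderiv_radialFlux_add_fderiv_angularFlux (hf : ContDiffAt ℝ 2 f (circleMap c p.1 p.2)) :
    fderiv ℝ (radialFlux f c) p (1, 0) + fderiv ℝ (angularFlux f c) p (0, 1) =
      p.1 • Δ f (circleMap c p.1 p.2) := by
  have hcircle : circleMap 0 1 p.2 = Circle.exp p.2 := by simp [circleMap]
  rw [fderiv_radialFlux_apply_one_zero hf, fderiv_angularFlux_apply_zero_one hf,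
    laplacian_eq_fderiv_fderiv_circle f _ (Circle.exp p.2), ← hcircle]
  module

theorem integral_integral_smul_laplacian_circleMap {r : ℝ} (hr : 0 ≤ r)
    (hf : ∀ z ∈ closedBall c r, ContDiffAt ℝ 2 f z) :
    ∫ s in (0 : ℝ)..r, ∫ θ in (0 : ℝ)..2 * π, s • Δ f (circleMap c s θ) =
      ∫ θ in (0 : ℝ)..2 * π, radialFlux f c (r, θ) := by
  have hf' : ∀ p ∈ uIcc 0 r ×ˢ uIcc 0 (2 * π), ContDiffAt ℝ 2 f (circleMap c p.1 p.2) :=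
    fun p hp ↦ hf _ (mapsTo_circleMap_closedBall c r _ (by rwa [uIcc_of_le hr] at hp))
  have hinterior : Ioo (min 0 r) (max 0 r) ×ˢ Ioo (min 0 (2 * π)) (max 0 (2 * π)) ⊆
      uIcc 0 r ×ˢ uIcc 0 (2 * π) := prod_mono Ioo_subset_Icc_self Ioo_subset_Icc_self
  have hdiv : ∀ p ∈ uIcc 0 r ×ˢ uIcc 0 (2 * π), fderiv ℝ (radialFlux f c) p (1, 0) +
      fderiv ℝ (angularFlux f c) p (0, 1) = p.1 • Δ f (circleMap c p.1 p.2) := fun p hp ↦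
    fderiv_radialFlux_add_fderiv_angularFlux (hf' p hp)
  have hint : IntegrableOn (fun p ↦ fderiv ℝ (radialFlux f c) p (1, 0) +
      fderiv ℝ (angularFlux f c) p (0, 1)) (uIcc 0 r ×ˢ uIcc 0 (2 * π)) := by
    refine ContinuousOn.integrableOn_compact (isCompact_uIcc.prod isCompact_uIcc)
      (ContinuousOn.congr (fun p hp ↦ ContinuousAt.continuousWithinAt ?_) hdiv)
    exact continuousAt_fst.smul ((continuousAt_laplacian (hf' p hp)).comp
      (f := fun q : ℝ × ℝ ↦ circleMap c q.1 q.2) circleMap.continuous.continuousAt)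
  have hperiod (s : ℝ) : angularFlux f c (s, 2 * π) = angularFlux f c (s, 0) := by
    simp [angularFlux, circleMap]
  have hcenter (θ : ℝ) : radialFlux f c (0, θ) = 0 := by simp [radialFlux, circleMap]
  rw [← intervalIntegral.integral_congr fun s hs ↦ intervalIntegral.integral_congr fun θ hθ ↦
    hdiv (s, θ) ⟨hs, hθ⟩, integral2_divergence_prod_of_hasFDerivAt (radialFlux f c)
      (angularFlux f c) (fderiv ℝ (radialFlux f c)) (fderiv ℝ (angularFlux f c)) 0 0 r (2 * π)
      (fun p hp ↦ (contDiffAt_radialFlux (hf' p hp)).continuousAt.continuousWithinAt)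
      (fun p hp ↦ (contDiffAt_angularFlux (hf' p hp)).continuousAt.continuousWithinAt)
      (fun p hp ↦ ((contDiffAt_radialFlux (hf' p (hinterior hp))).differentiableAt
        one_ne_zero).hasFDerivAt)
      (fun p hp ↦ ((contDiffAt_angularFlux (hf' p (hinterior hp))).differentiableAt
        one_ne_zero).hasFDerivAt) hint]
  simp [hperiod, hcenter]

theorem setIntegral_ball_laplacian {r : ℝ} (hr : 0 ≤ r)
    (hf : ∀ z ∈ closedBall c r, ContDiffAt ℝ 2 f z) :
    ∫ z in ball c r, Δ f z = (2 * π) • circleAverage (fun z ↦ fderiv ℝ f z (z - c)) c r := by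
  have hΔ : ContinuousOn (Δ f) (closedBall c r) := fun z hz ↦
    (continuousAt_laplacian (hf z hz)).continuousWithinAt
  rw [setIntegral_ball_eq_intervalIntegral_circleAverage hr hΔ, circleAverage_def,
    smul_inv_smul₀ two_pi_pos.ne']
  simp only [two_pi_mul_smul_circleAverage, integral_integral_smul_laplacian_circleMap hr hf,
    radialFlux, circleMap_sub_center]

end PolarFlux

theorem hasDerivAt_circleAverage_of_laplacian {f : ℂ → E} {c : ℂ} {r : ℝ} (hr : 0 < r)
    (hf : ∀ z ∈ closedBall c r, ContDiffAt ℝ 2 f z) :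
    HasDerivAt (circleAverage f c) ((2 * π * r)⁻¹ • ∫ z in ball c r, Δ f z) r := by
  have hsphere : ∀ z ∈ sphere c |r|, ContDiffAt ℝ 1 f z := fun z hz ↦
    (hf z (sphere_subset_closedBall (by rwa [abs_of_pos hr] at hz))).of_le (by norm_num)
  convert hasDerivAt_circleAverage hr.ne' hsphere using 1
  rw [setIntegral_ball_laplacian hr.le hf, smul_smul]
  congr 1
  field_simp

theorem contDiffAt_of_mem_closedBall {f : ℂ → E} {c : ℂ} {r R : ℝ} {n : WithTop ℕ∞}
    (hf : ContDiffOn ℝ n f (ball c R)) (hrR : r < R) : ∀ z ∈ closedBall c r, ContDiffAt ℝ n f z :=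
  fun _ hz ↦ hf.contDiffAt (isOpen_ball.mem_nhds (closedBall_subset_ball hrR hz))

theorem continuousOn_circleAverage_Icc {f : ℂ → E} {c : ℂ} {R : ℝ}
    (hf : ContinuousOn f (closedBall c R)) : ContinuousOn (circleAverage f c) (Icc 0 R) :=
  ContinuousOn.circleAverage
    (hf.mono fun _ hz ↦ mem_closedBall_iff_norm.2 hz.2) fun _ hs ↦ hs.1

section Subharmonic

variable {f : ℂ → ℝ} {c : ℂ} {r R : ℝ}

theorem monotoneOn_setIntegral_ball_laplacian (hf : ContDiffOn ℝ 2 f (ball c R))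
    (hΔ : ∀ z ∈ ball c R, 0 ≤ Δ f z) :
    MonotoneOn (fun r ↦ ∫ z in ball c r, Δ f z) (Iio R) := by
  intro r _ s (hs : s < R) hrs
  have hcont : ContinuousOn (Δ f) (closedBall c s) := fun z hz ↦
    (continuousAt_laplacian (contDiffAt_of_mem_closedBall hf hs z hz)).continuousWithinAt
  refine setIntegral_mono_set ((hcont.integrableOn_compact (isCompact_closedBall c s)).mono_set
    ball_subset_closedBall) ?_ (ball_subset_ball hrs).eventuallyLE
  exact ae_restrict_of_forall_mem measurableSet_ball fun z hz ↦ hΔ z (ball_subset_ball hs.le hz)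

theorem monotoneOn_circleAverage (hf : ContDiffOn ℝ 2 f (ball c R))
    (hfc : ContinuousOn f (closedBall c R)) (hΔ : ∀ z ∈ ball c R, 0 ≤ Δ f z) :
    MonotoneOn (circleAverage f c) (Icc 0 R) := by
  have hderiv : ∀ s ∈ interior (Icc 0 R),
      HasDerivAt (circleAverage f c) ((2 * π * s)⁻¹ * ∫ z in ball c s, Δ f z) s := by
    rw [interior_Icc]
    exact fun s hs ↦
      hasDerivAt_circleAverage_of_laplacian hs.1 (contDiffAt_of_mem_closedBall hf hs.2)
  refine monotoneOn_of_deriv_nonneg (convex_Icc 0 R) (continuousOn_circleAverage_Icc hfc)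
    (fun s hs ↦ (hderiv s hs).differentiableAt.differentiableWithinAt) fun s hs ↦ ?_
  rw [(hderiv s hs).deriv]
  rw [interior_Icc] at hs
  have hs₀ := hs.1
  have hmass : 0 ≤ ∫ z in ball c s, Δ f z :=
    setIntegral_nonneg measurableSet_ball fun z hz ↦ hΔ z (ball_subset_ball hs.2.le hz)
  positivity

theorem setIntegral_ball_laplacian_mul_log_le (hr : 0 < r) (hrR : r < R)
    (hf : ContDiffOn ℝ 2 f (ball c R)) (hfc : ContinuousOn f (closedBall c R))
    (hΔ : ∀ z ∈ ball c R, 0 ≤ Δ f z) :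
    (∫ z in ball c r, Δ f z) * Real.log (R / r) ≤
      2 * π * (circleAverage f c R - circleAverage f c r) := by
  set m := ∫ z in ball c r, Δ f z
  have hderiv : ∀ s ∈ interior (Icc r R), HasDerivAt
      (fun s ↦ 2 * π * circleAverage f c s - m * Real.log s)
      ((∫ z in ball c s, Δ f z) / s - m / s) s := by
    rw [interior_Icc]
    intro s hs
    have hs₀ : 0 < s := hr.trans hs.1
    refine (((hasDerivAt_circleAverage_of_laplacian hs₀
      (contDiffAt_of_mem_closedBall hf hs.2)).const_mul (2 * π)).sub
      ((Real.hasDerivAt_log hs₀.ne').const_mul m)).congr_deriv ?_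
    rw [smul_eq_mul]
    field_simp
  have hmono : MonotoneOn (fun s ↦ 2 * π * circleAverage f c s - m * Real.log s) (Icc r R) := by
    refine monotoneOn_of_deriv_nonneg (convex_Icc r R) ?_
      (fun s hs ↦ (hderiv s hs).differentiableAt.differentiableWithinAt) fun s hs ↦ ?_
    · exact (continuousOn_const.mul ((continuousOn_circleAverage_Icc hfc).mono
        (Icc_subset_Icc_left hr.le))).sub (continuousOn_const.mul
          (Real.continuousOn_log.mono fun s hs ↦ (hr.trans_le hs.1).ne'))
    · rw [(hderiv s hs).deriv]
      rw [interior_Icc] at hs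
      have hmass := monotoneOn_setIntegral_ball_laplacian hf hΔ hrR hs.2 hs.1.le
      rw [sub_nonneg]
      exact div_le_div_of_nonneg_right hmass (hr.trans hs.1).le
  have hends := hmono (left_mem_Icc.2 hrR.le) (right_mem_Icc.2 hrR.le) hrR.le
  rw [Real.log_div (hr.trans hrR).ne' hr.ne']
  linarith

theorem stmt_5_general {ε M : ℝ} (hR : 0 < R) (hε : ε ∈ Ioo (0 : ℝ) 1)
    (hf : ContDiffOn ℝ 2 f (ball c R)) (hfc : ContinuousOn f (closedBall c R))
    (hΔ : ∀ z ∈ ball c R, 0 ≤ laplacian f z) (hM : ∀ z ∈ sphere c R, f z ≤ f c + M) :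
    ∫ z in ball c (R * (1 - ε)), laplacian f z ≤ 2 * π * M / Real.log (1 / (1 - ε)) := by
  obtain ⟨hε₀, hε₁⟩ := hε
  have hr : 0 < R * (1 - ε) := mul_pos hR (sub_pos.2 hε₁)
  have hrR : R * (1 - ε) < R := mul_lt_of_lt_one_right hR (by linarith)
  have hlap : ∀ z ∈ ball c R, laplacian f z = Δ f z := fun z hz ↦
    laplacian_eq_laplacian (hf.contDiffAt (isOpen_ball.mem_nhds hz))
  have hΔ' : ∀ z ∈ ball c R, 0 ≤ Δ f z := fun z hz ↦ hlap z hz ▸ hΔ z hz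
  have hcenter : f c ≤ circleAverage f c (R * (1 - ε)) := by
    simpa using monotoneOn_circleAverage hf hfc hΔ' (left_mem_Icc.2 hR.le) ⟨hr.le, hrR.le⟩ hr.le
  have hboundary : circleAverage f c R ≤ f c + M :=
    circleAverage_mono_on_of_le_circle
      ((hfc.mono sphere_subset_closedBall).circleIntegrable hR.le) (by rwa [abs_of_pos hR])
  rw [setIntegral_congr_fun measurableSet_ball fun z hz ↦ hlap z (ball_subset_ball hrR.le hz),
    le_div_iff₀ (Real.log_pos (one_lt_one_div (by linarith) (by linarith)))]
  calc (∫ z in ball c (R * (1 - ε)), Δ f z) * Real.log (1 / (1 - ε))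
      = (∫ z in ball c (R * (1 - ε)), Δ f z) * Real.log (R / (R * (1 - ε))) := by
        rw [div_mul_cancel_left₀ hR.ne', one_div]
    _ ≤ 2 * π * (circleAverage f c R - circleAverage f c (R * (1 - ε))) :=
        setIntegral_ball_laplacian_mul_log_le hr hrR hf hfc hΔ'
    _ ≤ 2 * π * M := by gcongr; linarith

end Subharmonic

end PlanarCalculus

/-- If `ψ̃` is smooth subharmonic on an open neighborhood of the closed disk of radius `R > 0`,
with `ψ̃ ≤ 1` on the closed disk and `ψ̃(0) ≥ 0`, and `ε ∈ (0,1)`, then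
`∫_{B_{R(1−ε)}(0)} Δψ̃ dA ≤ 2π / log(1/(1−ε))`; in particular, for every `ε ∈ (0,1)` there is a
constant `C(ε)`, independent of `R` and `ψ̃`, bounding `(1/2π) ∫_{B_{R(1−ε)}(0)} Δψ̃ dA`. -/
theorem stmt_5 (R ε : ℝ) (hR : 0 < R) (hε : ε ∈ Set.Ioo (0 : ℝ) 1)
    (ψ : ℂ → ℝ) (U : Set ℂ) (hU : IsOpen U)
    (hUR : Metric.closedBall (0 : ℂ) R ⊆ U)
    (hsm : ContDiffOn ℝ (⊤ : ℕ∞) ψ U) (hsh : ∀ z ∈ U, 0 ≤ laplacian ψ z)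
    (h1 : ∀ z ∈ Metric.closedBall (0 : ℂ) R, ψ z ≤ 1) (h0 : 0 ≤ ψ 0) :
    (∫ ζ in Metric.ball (0 : ℂ) (R * (1 - ε)), laplacian ψ ζ)
        ≤ 2 * Real.pi / Real.log (1 / (1 - ε)) ∧
    (∀ ε' ∈ Set.Ioo (0 : ℝ) 1, ∃ C : ℝ,
      ∀ R' : ℝ, 0 < R' → ∀ ψ' : ℂ → ℝ, ∀ U' : Set ℂ, IsOpen U' →
        Metric.closedBall (0 : ℂ) R' ⊆ U' → ContDiffOn ℝ (⊤ : ℕ∞) ψ' U' →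
        (∀ z ∈ U', 0 ≤ laplacian ψ' z) →
        (∀ z ∈ Metric.closedBall (0 : ℂ) R', ψ' z ≤ 1) → 0 ≤ ψ' 0 →
        (1 / (2 * Real.pi)) * ∫ ζ in Metric.ball (0 : ℂ) (R' * (1 - ε')), laplacian ψ' ζ
          ≤ C) := by
  have bound {R ε : ℝ} {ψ : ℂ → ℝ} {U : Set ℂ} (hR : 0 < R) (hε : ε ∈ Set.Ioo (0 : ℝ) 1)
      (hUR : Metric.closedBall (0 : ℂ) R ⊆ U) (hsm : ContDiffOn ℝ (⊤ : ℕ∞) ψ U)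
      (hsh : ∀ z ∈ U, 0 ≤ laplacian ψ z) (h1 : ∀ z ∈ Metric.closedBall (0 : ℂ) R, ψ z ≤ 1)
      (h0 : 0 ≤ ψ 0) : ∫ ζ in Metric.ball (0 : ℂ) (R * (1 - ε)), laplacian ψ ζ ≤
        2 * Real.pi / Real.log (1 / (1 - ε)) := by
    have hball := Metric.ball_subset_closedBall.trans hUR
    simpa using stmt_5_general (M := 1) hR hε ((hsm.mono hball).of_le (by norm_cast))
      (hsm.continuousOn.mono hUR) (fun z hz ↦ hsh z (hball hz))
      fun z hz ↦ by linarith [h1 z (Metric.sphere_subset_closedBall hz)]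
  exact ⟨bound hR hε hUR hsm hsh h1 h0, fun ε' hε' ↦
    ⟨_, fun R' hR' ψ' U' _ hUR' hsm' hsh' h1' h0' ↦
      mul_le_mul_of_nonneg_left (bound hR' hε' hUR' hsm' hsh' h1' h0') (by positivity)⟩⟩
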